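/- arXiv:2110.09014 — 2 statements merged into one kernel-verified Lean document; each statement's English description precedes it below -/
import Mathlib

section
/- Let N ⊆ 𝔼, let F be an ultrafilter on a set I, and let X : I → (subsets of W) satisfy X(i) ∈ D_N for all i ∈ I and {i ∈ I : X(i) ≠ ∅} ∈ F. Then {i ∈ I : ◇_N⁵(X(i)) = W} ∈ F (where ◇_N⁵ is the 5-fold iterate of ◇_N). Consequently every ultrapower of D_N satisfies the simplicity condition ∀x ≠ 0, ◇⁵x = 1. -/
/-!
Every vertex other than `d` lies within distance two of the hub `a`, and `d` lies at distance
three from `a`, along the path `d, c₁, b₁, a`. Concatenating walks at `a` therefore joins any two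
distinct vertices by a walk of length at most five, and reflexivity of `R N` pads it to exactly
five (and handles the pair `d, d`). So `◇⁵ X` is everything as soon as `X` is nonempty, for every
`X`, whether or not it belongs to `D_N`; the statements about ultrapowers follow pointwise.
-/

/-- Vertices of the frame `𝔽_N`.  `u n` denotes the vertex `u_{n+1}` of the paper
(so that `u 0, u 1, …` enumerate `u₁, u₂, …`), and `l n` denotes `ℓ_n`. -/
inductive V : Type
  | a | b1 | b2 | b3 | c1 | c2 | d
  | u (n : ℕ)
  | l (n : ℕ)
  deriving DecidableEq

/-- `𝔼`, the set of positive even integers. -/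
def EE : Set ℕ := {n | Even n ∧ 0 < n}

/-- The edges of the frame `𝔽_N` (one direction of each edge; loops are added in `R`).
Recall that `V.u n` denotes `u_{n+1}`. -/
inductive E (N : Set ℕ) : V → V → Prop
  | ab1 : E N .a .b1
  | ab2 : E N .a .b2
  | ab3 : E N .a .b3
  | b1c1 : E N .b1 .c1
  | b2c2 : E N .b2 .c2
  | c1d : E N .c1 .d
  | l0l1 : E N (.l 0) (.l 1)
  /-- `{a, ℓᵢ}` for every `i ≥ 0` -/
  | al (i : ℕ) : E N .a (.l i)
  /-- `{ℓᵢ, uᵢ}` for every `i ≥ 1` (here `i = j + 1`) -/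
  | lu (j : ℕ) : E N (.l (j + 1)) (.u j)
  /-- `{ℓᵢ, u_{i-1}}` for every even `i ≥ 2` (here `i = j + 2`) -/
  | ldown (j : ℕ) (hj : Even j) : E N (.l (j + 2)) (.u j)
  /-- `{ℓᵢ, u_{i+1}}` for every `i ∈ N` -/
  | lN (i : ℕ) (hi : i ∈ N) : E N (.l i) (.u i)
  /-- `{ℓ_{i+1}, uᵢ}` for every even `i ≥ 2` with `i ∉ N` (here `i = j + 2`) -/
  | lnN (j : ℕ) (hj : Even j) (hjN : j + 2 ∉ N) : E N (.l (j + 3)) (.u (j + 1))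

/-- The accessibility relation `R_N`: the reflexive symmetric closure of the edges. -/
def R (N : Set ℕ) (x y : V) : Prop := x = y ∨ E N x y ∨ E N y x

/-- `◇_N X = {w : ∃ v ∈ X, v R_N w}`. -/
def dia (N : Set ℕ) (X : Set V) : Set V := {w | ∃ v ∈ X, R N v w}

/-- `D_N`: the smallest collection of subsets of `W` containing `{d}` and closed under
union, complement and `◇_N`. -/
inductive DN (N : Set ℕ) : Set V → Prop
  | base : DN N {V.d}
  | union {X Y : Set V} : DN N X → DN N Y → DN N (X ∪ Y)
  | compl {X : Set V} : DN N X → DN N Xᶜ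
  | diam {X : Set V} : DN N X → DN N (dia N X)

theorem R.rfl' {N : Set ℕ} (x : V) : R N x x := Or.inl rfl

theorem R.comm {N : Set ℕ} {x y : V} (h : R N x y) : R N y x := by
  rcases h with h | h | h
  · exact Or.inl h.symm
  · exact Or.inr (Or.inr h)
  · exact Or.inr (Or.inl h)

theorem R.of_edge {N : Set ℕ} {x y : V} (h : E N x y) : R N x y := Or.inr (Or.inl h)

theorem exists_two_step_to_hub (N : Set ℕ) (x : V) (hx : x ≠ .d) :
    ∃ w, R N x w ∧ R N w .a := by
  cases x with
  | a => exact ⟨.a, R.rfl' _, R.rfl' _⟩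
  | b1 => exact ⟨.b1, R.rfl' _, (R.of_edge .ab1).comm⟩
  | b2 => exact ⟨.b2, R.rfl' _, (R.of_edge .ab2).comm⟩
  | b3 => exact ⟨.b3, R.rfl' _, (R.of_edge .ab3).comm⟩
  | c1 => exact ⟨.b1, (R.of_edge .b1c1).comm, (R.of_edge .ab1).comm⟩
  | c2 => exact ⟨.b2, (R.of_edge .b2c2).comm, (R.of_edge .ab2).comm⟩
  | d => exact absurd rfl hx
  | u n => exact ⟨.l (n + 1), (R.of_edge (.lu n)).comm, (R.of_edge (.al _)).comm⟩
  | l n => exact ⟨.l n, R.rfl' _, (R.of_edge (.al n)).comm⟩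

/-- Any two vertices are joined by a walk of length exactly five (loops allowed). -/
theorem exists_five_step (N : Set ℕ) (x y : V) :
    ∃ p q r s, R N x p ∧ R N p q ∧ R N q r ∧ R N r s ∧ R N s y := by
  have h1 : R N .a .b1 := .of_edge .ab1
  have h2 : R N .b1 .c1 := .of_edge .b1c1
  have h3 : R N .c1 .d := .of_edge .c1d
  by_cases hx : x = .d
  · subst hx
    by_cases hy : y = .d
    · subst hy
      exact ⟨.d, .d, .d, .d, R.rfl' _, R.rfl' _, R.rfl' _, R.rfl' _, R.rfl' _⟩
    · obtain ⟨w, hw, hwa⟩ := exists_two_step_to_hub N y hy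
      exact ⟨.c1, .b1, .a, w, h3.comm, h2.comm, h1.comm, hwa.comm, hw.comm⟩
  · obtain ⟨v, hv, hva⟩ := exists_two_step_to_hub N x hx
    by_cases hy : y = .d
    · subst hy
      exact ⟨v, .a, .b1, .c1, hv, hva, h1, h2, h3⟩
    · obtain ⟨w, hw, hwa⟩ := exists_two_step_to_hub N y hy
      exact ⟨v, .a, w, y, hv, hva, hwa.comm, hw.comm, R.rfl' _⟩

theorem dia_iterate_five (N : Set ℕ) {X : Set V} (hX : X ≠ ∅) :
    (dia N)^[5] X = Set.univ := by
  obtain ⟨x, hx⟩ := Set.nonempty_iff_ne_empty.2 hX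
  refine Set.eq_univ_of_forall fun y => ?_
  obtain ⟨p, q, r, s, h1, h2, h3, h4, h5⟩ := exists_five_step N x y
  exact ⟨s, ⟨r, ⟨q, ⟨p, ⟨x, hx, h1⟩, h2⟩, h3⟩, h4⟩, h5⟩

/-- For `N ⊆ 𝔼`, an ultrafilter `F` on `I`, and `X : I → D_N` with
`{i : X(i) ≠ ∅} ∈ F`, one has `{i : ◇_N⁵(X(i)) = W} ∈ F`; consequently every
ultrapower of `D_N` satisfies the simplicity condition `∀ x ≠ 0, ◇⁵x = 1`. -/
theorem ultrapower_simple (N : Set ℕ) (hN : N ⊆ EE)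
    {I : Type*} (F : Ultrafilter I) :
    (∀ X : I → Set V, (∀ i, DN N (X i)) → {i | X i ≠ ∅} ∈ F →
      {i | (dia N)^[5] (X i) = Set.univ} ∈ F) ∧
    (∀ f : I → Set V, (∀ i, DN N (f i)) →
      (f : Filter.Germ (F : Filter I) (Set V)) ≠ ((fun _ : I => (∅ : Set V)) :
        Filter.Germ (F : Filter I) (Set V)) →
      (Filter.Germ.map (dia N))^[5] (f : Filter.Germ (F : Filter I) (Set V)) =
        ((fun _ : I => (Set.univ : Set V)) : Filter.Germ (F : Filter I) (Set V))) := by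
  refine ⟨fun X _ hX => Filter.mem_of_superset hX fun i hi => dia_iterate_five N hi,
    fun f _ hf => ?_⟩
  -- In an ultraproduct, a germ different from `0` is represented by a function that is
  -- nonempty on a set of `F`, not merely on a set whose complement is outside `F`.
  have hne : ∀ᶠ i in (F : Filter I), f i ≠ ∅ :=
    Ultrafilter.eventually_not.2 fun h => hf (Filter.Germ.coe_eq.2 h)
  exact Filter.Germ.coe_eq.2 (hne.mono fun i hi => dia_iterate_five N hi)
end

section
/- Let N ⊆ 𝔼, let F be an ultrafilter on a set I, and let S be a subalgebra of the ultrapower D_N^I/F. Suppose there is s ∈ S with s ≠ (the germ of the constant ∅) and with the lifted ◇_N of s not equal to the germ of the constant W. Then the germ of the constant function with value {d} belongs to S; consequently S contains the germ of the constant function with value Y for every Y ∈ D_N (the diagonal copy of D_N embeds into S). -/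
/-- The germ in the ultrapower `(Set V)^I/F` of the constant function with value `Y`. -/
def cst {I : Type*} (F : Ultrafilter I) (Y : Set V) : Filter.Germ (F : Filter I) (Set V) :=
  ↑(fun _ : I => Y)

/-- A subalgebra `S` of the ultrapower `D_N^I/F`: a set of germs of `D_N`-valued
functions containing the germs of the constant functions `∅` and `W` and closed under
the pointwise-lifted operations `∪`, complement and `◇_N`. -/
def IsSubalgebra {I : Type*} (N : Set ℕ) (F : Ultrafilter I)
    (S : Set (Filter.Germ (F : Filter I) (Set V))) : Prop :=
  (∀ s ∈ S, ∃ f : I → Set V, (∀ i, DN N (f i)) ∧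
      s = (f : Filter.Germ (F : Filter I) (Set V))) ∧
  cst F ∅ ∈ S ∧
  cst F Set.univ ∈ S ∧
  (∀ s t, s ∈ S → t ∈ S → Filter.Germ.map₂ (· ∪ ·) s t ∈ S) ∧
  (∀ s ∈ S, Filter.Germ.map compl s ∈ S) ∧
  (∀ s ∈ S, Filter.Germ.map (dia N) s ∈ S)

section Frame

variable {N : Set ℕ} {X : Set V}

lemma subset_dia : X ⊆ dia N X := fun x hx => ⟨x, hx, Or.inl rfl⟩

lemma a_mem_dia : V.a ∈ dia N X ↔
    V.a ∈ X ∨ V.b1 ∈ X ∨ V.b2 ∈ X ∨ V.b3 ∈ X ∨ ∃ i, V.l i ∈ X := by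
  constructor
  · rintro ⟨v, hv, rfl | h | h⟩
    · exact Or.inl hv
    · cases h
    · cases h with
      | al i => exact Or.inr (Or.inr (Or.inr (Or.inr ⟨i, hv⟩)))
      | _ => tauto
  · rintro (h | h | h | h | ⟨i, h⟩)
    · exact subset_dia h
    · exact ⟨_, h, Or.inr (Or.inr .ab1)⟩
    · exact ⟨_, h, Or.inr (Or.inr .ab2)⟩
    · exact ⟨_, h, Or.inr (Or.inr .ab3)⟩
    · exact ⟨_, h, Or.inr (Or.inr (.al i))⟩

lemma b1_mem_dia : V.b1 ∈ dia N X ↔ V.b1 ∈ X ∨ V.a ∈ X ∨ V.c1 ∈ X := by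
  constructor
  · rintro ⟨v, hv, rfl | h | h⟩
    · exact Or.inl hv
    all_goals cases h <;> tauto
  · rintro (h | h | h)
    · exact subset_dia h
    · exact ⟨_, h, Or.inr (Or.inl .ab1)⟩
    · exact ⟨_, h, Or.inr (Or.inr .b1c1)⟩

lemma b2_mem_dia : V.b2 ∈ dia N X ↔ V.b2 ∈ X ∨ V.a ∈ X ∨ V.c2 ∈ X := by
  constructor
  · rintro ⟨v, hv, rfl | h | h⟩
    · exact Or.inl hv
    all_goals cases h <;> tauto
  · rintro (h | h | h)
    · exact subset_dia h
    · exact ⟨_, h, Or.inr (Or.inl .ab2)⟩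
    · exact ⟨_, h, Or.inr (Or.inr .b2c2)⟩

lemma b3_mem_dia : V.b3 ∈ dia N X ↔ V.b3 ∈ X ∨ V.a ∈ X := by
  constructor
  · rintro ⟨v, hv, rfl | h | h⟩
    · exact Or.inl hv
    all_goals cases h <;> tauto
  · rintro (h | h)
    · exact subset_dia h
    · exact ⟨_, h, Or.inr (Or.inl .ab3)⟩

lemma c1_mem_dia : V.c1 ∈ dia N X ↔ V.c1 ∈ X ∨ V.b1 ∈ X ∨ V.d ∈ X := by
  constructor
  · rintro ⟨v, hv, rfl | h | h⟩
    · exact Or.inl hv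
    all_goals cases h <;> tauto
  · rintro (h | h | h)
    · exact subset_dia h
    · exact ⟨_, h, Or.inr (Or.inl .b1c1)⟩
    · exact ⟨_, h, Or.inr (Or.inr .c1d)⟩

lemma c2_mem_dia : V.c2 ∈ dia N X ↔ V.c2 ∈ X ∨ V.b2 ∈ X := by
  constructor
  · rintro ⟨v, hv, rfl | h | h⟩
    · exact Or.inl hv
    all_goals cases h <;> tauto
  · rintro (h | h)
    · exact subset_dia h
    · exact ⟨_, h, Or.inr (Or.inl .b2c2)⟩

lemma d_mem_dia : V.d ∈ dia N X ↔ V.d ∈ X ∨ V.c1 ∈ X := by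
  constructor
  · rintro ⟨v, hv, rfl | h | h⟩
    · exact Or.inl hv
    all_goals cases h <;> tauto
  · rintro (h | h)
    · exact subset_dia h
    · exact ⟨_, h, Or.inr (Or.inl .c1d)⟩

lemma l_mem_dia_of_a (h : V.a ∈ X) (i : ℕ) : V.l i ∈ dia N X :=
  ⟨_, h, Or.inr (Or.inl (.al i))⟩

lemma u_mem_dia_of_l {j : ℕ} (h : V.l (j + 1) ∈ X) : V.u j ∈ dia N X :=
  ⟨_, h, Or.inr (Or.inl (.lu j))⟩

lemma l_mem_dia_of_u {j : ℕ} (h : V.u j ∈ X) : V.l (j + 1) ∈ dia N X :=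
  ⟨_, h, Or.inr (Or.inr (.lu j))⟩

lemma a_not_mem_dia_compl_dia (h : V.a ∈ X) : V.a ∉ dia N (dia N X)ᶜ := by
  rintro ⟨v, hv, hR⟩
  refine hv ⟨_, h, ?_⟩
  rcases hR with rfl | hR | hR
  exacts [Or.inl rfl, Or.inr (Or.inr hR), Or.inr (Or.inl hR)]

/-- Every vertex other than `d` is at distance at most two from `a`. -/
lemma mem_dia_dia_of_a (h : V.a ∈ X) {x : V} (hx : x ≠ V.d) : x ∈ dia N (dia N X) := by
  cases x with
  | d => exact absurd rfl hx
  | l i => exact subset_dia (l_mem_dia_of_a h i)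
  | u j => exact u_mem_dia_of_l (l_mem_dia_of_a h _)
  | a => exact subset_dia (subset_dia h)
  | b1 => simp [b1_mem_dia, h]
  | b2 => simp [b2_mem_dia, h]
  | b3 => simp [b3_mem_dia, h]
  | c1 => simp [c1_mem_dia, b1_mem_dia, h]
  | c2 => simp [c2_mem_dia, b2_mem_dia, h]

lemma compl_dia_dia_eq_singleton (ha : V.a ∈ X) (hd : V.d ∉ dia N (dia N X)) :
    (dia N (dia N X))ᶜ = {V.d} := by
  ext x
  simp only [Set.mem_compl_iff, Set.mem_singleton_iff]
  refine ⟨fun h => by_contra fun hx => h (mem_dia_dia_of_a ha hx), ?_⟩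
  rintro rfl
  exact hd

/-- From a set `X` that is neither empty nor dense one obtains a nonempty set not
accessible from `a`, by one of three terms. -/
lemma exists_far_from_a (h0 : X ≠ ∅) (h1 : dia N X ≠ Set.univ) :
    (X ≠ ∅ ∧ V.a ∉ dia N X) ∨
    ((dia N X)ᶜ ≠ ∅ ∧ V.a ∉ dia N (dia N X)ᶜ) ∨
    ((dia N (dia N X ∩ dia N (dia N X)ᶜ))ᶜ ≠ ∅ ∧
      V.a ∉ dia N (dia N (dia N X ∩ dia N (dia N X)ᶜ))ᶜ) := by
  by_cases ha : V.a ∈ dia N X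
  swap
  · exact Or.inl ⟨h0, ha⟩
  right
  by_cases hb : V.a ∈ dia N (dia N X)ᶜ
  swap
  · exact Or.inl ⟨fun h => h1 (Set.compl_empty_iff.1 h), hb⟩
  right
  have haX : V.a ∉ X := fun h => a_not_mem_dia_compl_dia h hb
  refine ⟨Set.nonempty_iff_ne_empty.1 ⟨V.c2, ?_⟩, a_not_mem_dia_compl_dia ⟨ha, hb⟩⟩
  simp only [Set.mem_compl_iff, c2_mem_dia, b2_mem_dia, Set.mem_inter_iff]
  tauto

/-- A nonempty set `X` not accessible from `a` yields `{d}` by one of three terms. -/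
lemma eq_singleton_d (h0 : X ≠ ∅) (ha : V.a ∉ dia N X) :
    X = {V.d} ∨ (dia N (dia N (dia N (dia N X))))ᶜ = {V.d} ∨
    (dia N (dia N (dia N (dia N (dia N X))ᶜ)))ᶜ = {V.d} := by
  have ha' := ha
  rw [a_mem_dia] at ha'
  push Not at ha'
  obtain ⟨hXa, hb1, hb2, hb3, hl⟩ := ha'
  -- The third term works as soon as `◇²X` contains the path from `a` to `d`,
  -- since `b₃` is outside `◇²X` and its only neighbour is `a`.
  have third (h2 : V.a ∈ dia N (dia N X)) (h3 : V.c1 ∈ X ∨ V.d ∈ X) :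
      (dia N (dia N (dia N (dia N (dia N X))ᶜ)))ᶜ = {V.d} := by
    apply compl_dia_dia_eq_singleton
    · rw [a_mem_dia]
      simp [b3_mem_dia, ha, hb3, hXa]
    · simp only [d_mem_dia, c1_mem_dia, b1_mem_dia, Set.mem_compl_iff]
      tauto
  by_cases hc1 : V.c1 ∈ X
  · right; right
    refine third ?_ (Or.inl hc1)
    simp [a_mem_dia, b1_mem_dia, hc1]
  by_cases hX : X = {V.d}
  · exact Or.inl hX
  right
  have h2 : V.a ∈ dia N (dia N X) := by
    obtain ⟨x, hx, hxd⟩ : ∃ x ∈ X, x ≠ V.d := by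
      by_contra! h
      exact hX ((Set.nonempty_iff_ne_empty.2 h0).subset_singleton_iff.1 h)
    rw [a_mem_dia]
    cases x with
    | u j => exact Or.inr (Or.inr (Or.inr (Or.inr ⟨_, l_mem_dia_of_u hx⟩)))
    | c2 => simp [b2_mem_dia, hx]
    | l i => exact absurd hx (hl i)
    | _ => contradiction
  by_cases hd : V.d ∈ X
  · exact Or.inr (third h2 (Or.inr hd))
  · left
    apply compl_dia_dia_eq_singleton h2
    simp only [d_mem_dia, c1_mem_dia, b1_mem_dia]
    tauto

end Frame

/-- If a subalgebra `S` of the ultrapower `D_N^I/F` contains some `s ≠ 0` with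
`◇s ≠ 1`, then `S` contains the germ of the constant function with value `{d}`, and
consequently the germ of the constant function with value `Y` for every `Y ∈ D_N`
(the diagonal copy of `D_N` embeds into `S`). -/
theorem big_subalgebra (N : Set ℕ) (hN : N ⊆ EE)
    {I : Type*} (F : Ultrafilter I)
    (S : Set (Filter.Germ (F : Filter I) (Set V)))
    (hS : IsSubalgebra N F S)
    (h : ∃ s ∈ S, s ≠ cst F ∅ ∧ Filter.Germ.map (dia N) s ≠ cst F Set.univ) :
    cst F {V.d} ∈ S ∧ ∀ Y : Set V, DN N Y → cst F Y ∈ S := by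
  obtain ⟨-, -, -, hun, hco, hdi⟩ := hS
  have hunc : ∀ f g : I → Set V, (f : Filter.Germ (F : Filter I) (Set V)) ∈ S →
      (g : Filter.Germ (F : Filter I) (Set V)) ∈ S →
      ((fun i => f i ∪ g i : I → Set V) : Filter.Germ (F : Filter I) (Set V)) ∈ S :=
    fun f g hf hg => hun _ _ hf hg
  have hcoc : ∀ f : I → Set V, (f : Filter.Germ (F : Filter I) (Set V)) ∈ S →
      ((fun i => (f i)ᶜ : I → Set V) : Filter.Germ (F : Filter I) (Set V)) ∈ S :=
    fun f hf => hco _ hf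
  have hdic : ∀ f : I → Set V, (f : Filter.Germ (F : Filter I) (Set V)) ∈ S →
      ((fun i => dia N (f i) : I → Set V) : Filter.Germ (F : Filter I) (Set V)) ∈ S :=
    fun f hf => hdi _ hf
  have hinc : ∀ f g : I → Set V, (f : Filter.Germ (F : Filter I) (Set V)) ∈ S →
      (g : Filter.Germ (F : Filter I) (Set V)) ∈ S →
      ((fun i => f i ∩ g i : I → Set V) : Filter.Germ (F : Filter I) (Set V)) ∈ S := by
    intro f g hf hg
    simpa only [Set.compl_union, compl_compl] using
      hcoc _ (hunc _ _ (hcoc _ hf) (hcoc _ hg))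
  have far : ∃ g : I → Set V, (g : Filter.Germ (F : Filter I) (Set V)) ∈ S ∧
      ∀ᶠ i in (F : Filter I), g i ≠ ∅ ∧ V.a ∉ dia N (g i) := by
    obtain ⟨s, hs, h0, h1⟩ := h
    obtain ⟨f, rfl⟩ := Quotient.exists_rep s
    have h0' : ∀ᶠ i in (F : Filter I), f i ≠ ∅ :=
      Ultrafilter.eventually_not.2 fun h => h0 (Filter.Germ.coe_eq.2 h)
    have h1' : ∀ᶠ i in (F : Filter I), dia N (f i) ≠ Set.univ :=
      Ultrafilter.eventually_not.2 fun h => h1 (Filter.Germ.coe_eq.2 h)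
    have key := (h0'.and h1').mono fun i hi => exists_far_from_a hi.1 hi.2
    rw [Ultrafilter.eventually_or, Ultrafilter.eventually_or] at key
    rcases key with key | key | key
    · exact ⟨f, hs, key⟩
    · exact ⟨_, hcoc _ (hdic _ hs), key⟩
    · exact ⟨_, hcoc _ (hdic _ (hinc _ _ (hdic _ hs) (hdic _ (hcoc _ (hdic _ hs))))), key⟩
  have hd : cst F {V.d} ∈ S := by
    obtain ⟨g, hg, hF⟩ := far
    have mem : ∀ k : I → Set V, (k : Filter.Germ (F : Filter I) (Set V)) ∈ S →
        (∀ᶠ i in (F : Filter I), k i = {V.d}) → cst F {V.d} ∈ S := fun k hk hkd => by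
      have : (k : Filter.Germ (F : Filter I) (Set V)) = cst F {V.d} :=
        Filter.Germ.coe_eq.2 hkd
      exact this ▸ hk
    have key := hF.mono fun i hi => eq_singleton_d hi.1 hi.2
    rw [Ultrafilter.eventually_or, Ultrafilter.eventually_or] at key
    rcases key with key | key | key
    · exact mem _ hg key
    · exact mem _ (hcoc _ (hdic _ (hdic _ (hdic _ (hdic _ hg))))) key
    · exact mem _ (hcoc _ (hdic _ (hdic _ (hdic _ (hcoc _ (hdic _ (hdic _ hg))))))) key
  refine ⟨hd, fun Y hY => ?_⟩
  induction hY with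
  | base => exact hd
  | union _ _ h1 h2 => exact hunc _ _ h1 h2
  | compl _ h1 => exact hcoc _ h1
  | diam _ h1 => exact hdic _ h1
end
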